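/- arXiv:0901.0880 — 2 statements merged into one kernel-verified Lean document; each statement's English description precedes it below -/
import Mathlib

section
/- Let (Γ, ⪯) be a left-ordered group and let (G, H) be a convex jump in Γ (H ⊊ G are ⪯-convex subgroups with no ⪯-convex subgroup strictly between them) such that G is a ⪯-Conradian extension of H. Then there exists a nontrivial group homomorphism τ : G → (ℝ, +) with kernel exactly H and with τ(g) > 0 for every g ∈ G \ H satisfying g ≻ 1; moreover τ is unique up to multiplication by a positive real number: any other homomorphism with these properties equals c·τ for some real c > 0. -/
/-- A subgroup `C` of a left-ordered group is `≤`-convex if whenever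
`c₁, c₂ ∈ C` and `c₁ < f < c₂`, one has `f ∈ C`. -/
def IsConvexSubgroup {Γ : Type*} [Group Γ] [LinearOrder Γ] (C : Subgroup Γ) : Prop :=
  ∀ c₁ ∈ C, ∀ c₂ ∈ C, ∀ f : Γ, c₁ < f → f < c₂ → f ∈ C

/-- The induced strict order on left cosets of a (convex) subgroup `H`. -/
def CosetLT {Γ : Type*} [Group Γ] [LinearOrder Γ] (H : Subgroup Γ) (x y : Γ) : Prop :=
  x⁻¹ * y ∉ H ∧ x < y

/-- A crossing for the action of the group on the space of left cosets of `H`. -/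
def CosetCrossing {Γ : Type*} [Group Γ] [LinearOrder Γ] (H : Subgroup Γ)
    (f g u v w : Γ) : Prop :=
  CosetLT H u w ∧ CosetLT H w v ∧
  (∀ n : ℕ, 0 < n → CosetLT H (g ^ n * u) v ∧ CosetLT H u (f ^ n * v)) ∧
  ∃ M N : ℕ, 0 < M ∧ 0 < N ∧ CosetLT H (f ^ N * v) w ∧ CosetLT H w (g ^ M * u)

/-- `G` is a `≤`-Conradian extension of `H` if the coset action admits no crossing. -/
def IsConradianExtension {Γ : Type*} [Group Γ] [LinearOrder Γ] (G H : Subgroup Γ) : Prop :=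
  ∀ f g u v w : Γ, f ∈ G → g ∈ G → u ∈ G → v ∈ G → w ∈ G →
    ¬ CosetCrossing H f g u v w

/-!
Let `G` act on the left cosets of `H`, ordered by the convexity of `H`. If `g` moves the base coset
`o` up, the convex hull `B` of `{gⁿ • o}` is a block: if some `f` moved one point of `B` inside `B`
and a point `v` above `B` into `B`, then `f`, corrected by a power of `g`, would form a crossing
with `g`. Its stabilizer is a convex subgroup strictly larger than `H`, hence all of `G`, so the
powers of `g` are cofinal and `g` moves every coset up. Consequently an element fixing one coset
fixes all of them, `H` is normal, and `G ⧸ H` is a bi-ordered Archimedean group, which embeds in `ℝ`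
by Hölder's theorem. Two such embeddings are proportional because the sign of `a ^ q * g ^ (-p)`
decides the comparison of `p / q` with the quotient of the values at `a` and `g`.
-/

open MulAction
open scoped Pointwise

section ProportionalHoms

variable {A K : Type*} [AddGroup A] [Field K] [LinearOrder K] [IsStrictOrderedRing K]
  [Archimedean K] {φ ψ : A →+ K}

theorem div_le_div_of_pos_imp_pos (h : ∀ a, 0 < φ a → 0 < ψ a) {g : A} (hg : 0 < φ g) (a : A) :
    φ a / φ g ≤ ψ a / ψ g := by
  refine le_of_forall_rat_lt_imp_le fun q hq ↦ ?_
  have hden : (0 : K) < q.den := by exact_mod_cast q.den_pos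
  rw [Rat.cast_def, div_lt_div_iff₀ hden hg] at hq
  have hpos : 0 < φ (q.den • a - q.num • g) := by
    simpa [mul_comm] using hq
  have hpos' : 0 < ψ (q.den • a - q.num • g) := h _ hpos
  rw [Rat.cast_def, div_le_div_iff₀ hden (h g hg)]
  simpa [mul_comm] using hpos'.le

theorem exists_pos_mul_of_pos_imp_pos (h : ∀ a, 0 < φ a → 0 < ψ a) (hφ : φ ≠ 0) :
    ∃ c : K, 0 < c ∧ ∀ a, ψ a = c * φ a := by
  obtain ⟨g, hg⟩ : ∃ g, 0 < φ g := by
    obtain ⟨a, ha⟩ := DFunLike.ne_iff.1 hφ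
    rcases ha.lt_or_gt with hneg | hpos
    · exact ⟨-a, by simpa using hneg⟩
    · exact ⟨a, hpos⟩
  have hratio (a : A) : φ a / φ g = ψ a / ψ g := by
    refine (div_le_div_of_pos_imp_pos h hg a).antisymm ?_
    simpa [neg_div] using div_le_div_of_pos_imp_pos h hg (-a)
  have hψg : 0 < ψ g := h g hg
  refine ⟨ψ g / φ g, div_pos hψg hg, fun a ↦ ?_⟩
  rw [div_mul_eq_mul_div, mul_div_assoc, hratio a, mul_div_cancel₀ _ hψg.ne']

end ProportionalHoms

section Holder

variable {Q : Type*} [Group Q] [LinearOrder Q] [MulLeftMono Q] [MulRightMono Q]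

theorem exists_zpow_le_and_lt_zpow_add_one {g : Q} (hg : 1 < g)
    (harch : ∀ x : Q, ∃ n : ℕ, x ≤ g ^ n) (x : Q) :
    ∃ n : ℤ, g ^ n ≤ x ∧ x < g ^ (n + 1) := by
  have hmono : StrictMono fun n : ℤ ↦ g ^ n := strictMono_int_of_lt_succ fun n ↦ by
    simpa [zpow_add_one] using hg
  obtain ⟨a, ha⟩ := harch x
  obtain ⟨b, hb⟩ := harch x⁻¹
  have hbdd : ∀ z : ℤ, g ^ z ≤ x → z ≤ a := fun z hz ↦
    hmono.le_iff_le.1 (hz.trans (by simpa using ha))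
  have hne : g ^ (-b : ℤ) ≤ x := by simpa using inv_le_of_inv_le' hb
  obtain ⟨n, hn, hmax⟩ := Int.exists_greatest_of_bdd (P := fun z ↦ g ^ z ≤ x) ⟨a, hbdd⟩ ⟨-b, hne⟩
  exact ⟨n, hn, not_le.1 fun h ↦ (hmax _ h).not_gt (lt_add_one n)⟩

theorem mul_lt_sq_mul_mul_swap {g : Q} (hg : 1 < g) (harch : ∀ x : Q, ∃ n : ℕ, x ≤ g ^ n)
    (x y : Q) : x * y < g ^ 2 * (y * x) := by
  obtain ⟨m, hm, hm'⟩ := exists_zpow_le_and_lt_zpow_add_one hg harch x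
  obtain ⟨n, hn, hn'⟩ := exists_zpow_le_and_lt_zpow_add_one hg harch y
  calc
    x * y < g ^ (m + 1) * g ^ (n + 1) := mul_lt_mul_of_lt_of_lt hm' hn'
    _ = g ^ 2 * (g ^ n * g ^ m) := by group
    _ ≤ g ^ 2 * (y * x) := by gcongr

theorem exists_one_lt_sq_le {c d : Q} (hd : 1 < d) (hdc : d < c) : ∃ g : Q, 1 < g ∧ g ^ 2 ≤ c := by
  refine ⟨min d (d⁻¹ * c), lt_min hd (by simpa using hdc), ?_⟩
  calc
    min d (d⁻¹ * c) ^ 2 ≤ d * (d⁻¹ * c) := by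
      rw [sq]
      exact mul_le_mul' (min_le_left _ _) (min_le_right _ _)
    _ = c := mul_inv_cancel_left d c

theorem exists_eq_zpow_of_isLeast {c : Q} (hc : IsLeast {g : Q | 1 < g} c)
    (harch : ∀ x : Q, ∃ n : ℕ, x ≤ c ^ n) (x : Q) : ∃ n : ℤ, x = c ^ n := by
  obtain ⟨n, hn, hn'⟩ := exists_zpow_le_and_lt_zpow_add_one hc.1 harch x
  refine ⟨n, (hn.eq_of_not_lt fun hlt ↦ ?_).symm⟩
  have hle : c ≤ (c ^ n)⁻¹ * x := hc.2 (by simpa using hlt)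
  rw [le_inv_mul_iff_mul_le, ← zpow_add_one] at hle
  exact hle.not_gt hn'

theorem mul_comm_of_archimedean (harch : ∀ g : Q, 1 < g → ∀ x : Q, ∃ n : ℕ, x ≤ g ^ n)
    (x y : Q) : x * y = y * x := by
  wlog! hlt : y * x < x * y generalizing x y
  · exact hlt.eq_or_lt.elim id fun h ↦ (this y x h).symm
  exfalso
  let c : Q := x * y / (y * x)
  have hc : 1 < c := one_lt_div'.2 hlt
  have hc_lt (g : Q) (hg : 1 < g) : c < g ^ 2 :=
    div_lt_iff_lt_mul.2 (mul_lt_sq_mul_mul_swap hg (harch g hg) x y)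
  by_cases hleast : IsLeast {g : Q | 1 < g} c
  · obtain ⟨m, hm⟩ := exists_eq_zpow_of_isLeast hleast (harch c hc) x
    obtain ⟨n, hn⟩ := exists_eq_zpow_of_isLeast hleast (harch c hc) y
    rw [hm, hn] at hlt
    exact hlt.ne (zpow_mul_comm c n m)
  · obtain ⟨d, hd, hdc⟩ : ∃ d, 1 < d ∧ d < c := by
      simpa [IsLeast, hc, mem_lowerBounds] using hleast
    obtain ⟨g, hg, hgc⟩ := exists_one_lt_sq_le hd hdc
    exact (hc_lt g hg).not_ge hgc

theorem exists_strictMono_addMonoidHom_real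
    (harch : ∀ g : Q, 1 < g → ∀ x : Q, ∃ n : ℕ, x ≤ g ^ n) :
    ∃ τ : Additive Q →+ ℝ, StrictMono τ := by
  let _ : CommGroup Q := { ‹Group Q› with mul_comm := mul_comm_of_archimedean harch }
  have : IsOrderedMonoid Q := { mul_le_mul_left := fun _ _ h c ↦ mul_le_mul_left h c }
  have : MulArchimedean Q := ⟨fun x g hg ↦ harch g hg x⟩
  obtain ⟨τ, hτ⟩ := Archimedean.exists_orderAddMonoidHom_real_injective (Additive Q)
  exact ⟨τ, τ.monotone'.strictMono_of_injective hτ⟩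

end Holder

section OrderedAction

variable {G Ω : Type*} [Group G] [LinearOrder Ω] [MulAction G Ω]

/-- A crossing for an action on a linearly ordered set. Exponent zero is harmless in all four
conditions on powers, since `u < w < v`. -/
structure IsCrossing (f g : G) (u v w : Ω) : Prop where
  left_lt : u < w
  lt_right : w < v
  pow_smul_lt_right : ∀ n : ℕ, g ^ n • u < v
  left_lt_pow_smul : ∀ n : ℕ, u < f ^ n • v
  exists_pow_smul_lt : ∃ N : ℕ, f ^ N • v < w
  exists_lt_pow_smul : ∃ M : ℕ, w < g ^ M • u

theorem IsCrossing.ofDual {f g : G} {u v w : Ωᵒᵈ} (h : IsCrossing f g u v w) :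
    IsCrossing g f (OrderDual.ofDual v) (OrderDual.ofDual u) (OrderDual.ofDual w) where
  left_lt := h.lt_right
  lt_right := h.left_lt
  pow_smul_lt_right := h.left_lt_pow_smul
  left_lt_pow_smul := h.pow_smul_lt_right
  exists_pow_smul_lt := h.exists_lt_pow_smul
  exists_lt_pow_smul := h.exists_pow_smul_lt

/-- An action on a linearly ordered set admitting no crossing. -/
def IsCrossingFree (G Ω : Type*) [Group G] [LinearOrder Ω] [MulAction G Ω] : Prop :=
  ∀ (f g : G) (u v w : Ω), ¬ IsCrossing f g u v w

theorem IsCrossingFree.orderDual (h : IsCrossingFree G Ω) : IsCrossingFree G Ωᵒᵈ :=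
  fun _ _ _ _ _ hc ↦ h _ _ _ _ _ hc.ofDual

/-- An action on a linearly ordered set is o-primitive if its only convex blocks are the trivial
ones. -/
def IsOPrimitive (G Ω : Type*) [Group G] [LinearOrder Ω] [MulAction G Ω] : Prop :=
  ∀ B : Set Ω, IsBlock G B → B.OrdConnected → IsTrivialBlock B

/-- The convex hull of the orbit of `o` under the cyclic group generated by `g`. -/
def zpowersHull (g : G) (o : Ω) : Set Ω :=
  {x | ∃ m n : ℤ, g ^ m • o ≤ x ∧ x ≤ g ^ n • o}

theorem zpow_smul_self_mem_zpowersHull (g : G) (o : Ω) (k : ℤ) : g ^ k • o ∈ zpowersHull g o :=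
  ⟨k, k, le_rfl, le_rfl⟩

theorem self_mem_zpowersHull (g : G) (o : Ω) : o ∈ zpowersHull g o := by
  simpa using zpow_smul_self_mem_zpowersHull g o 0

theorem ordConnected_zpowersHull (g : G) (o : Ω) : (zpowersHull g o).OrdConnected :=
  ⟨fun _ ⟨m, _, hm, _⟩ _ ⟨_, n, _, hn⟩ _ hz ↦ ⟨m, n, hm.trans hz.1, hz.2.trans hn⟩⟩

theorem zpowersHull_inv (g : G) (o : Ω) : zpowersHull g⁻¹ o = zpowersHull g o := by
  ext x
  constructor <;> rintro ⟨m, n, hm, hn⟩ <;> exact ⟨-m, -n, by simpa using hm, by simpa using hn⟩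

theorem toDual_mem_zpowersHull {g : G} {o x : Ω} :
    OrderDual.toDual x ∈ zpowersHull g (OrderDual.toDual o) ↔ x ∈ zpowersHull g o :=
  ⟨fun ⟨m, n, hm, hn⟩ ↦ ⟨n, m, hn, hm⟩, fun ⟨m, n, hm, hn⟩ ↦ ⟨n, m, hn, hm⟩⟩

variable [CovariantClass G Ω HSMul.hSMul LE.le]

theorem smul_lt_smul_iff_of_covariant (a : G) {x y : Ω} : a • x < a • y ↔ x < y :=
  ((smul_mono_right a).strictMono_of_injective (MulAction.injective a)).lt_iff_lt

instance covariantClass_smul_orderDual : CovariantClass G Ωᵒᵈ HSMul.hSMul LE.le :=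
  ⟨fun a _ _ h ↦ smul_mono_right (α := Ω) a h⟩

theorem ordConnected_smul_set {B : Set Ω} (hB : B.OrdConnected) (a : G) : (a • B).OrdConnected := by
  rw [← Set.preimage_smul_inv]
  exact hB.preimage_mono (smul_mono_right a⁻¹)

variable {g f : G} {o u v x y : Ω}

theorem strictMono_zpow_smul (hg : o < g • o) : StrictMono fun n : ℤ ↦ g ^ n • o := by
  refine strictMono_int_of_lt_succ fun n ↦ ?_
  rwa [zpow_add_one, mul_smul, smul_lt_smul_iff_of_covariant]

theorem pow_smul_mem_zpowersHull (hx : x ∈ zpowersHull g o) (k : ℕ) :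
    g ^ k • x ∈ zpowersHull g o := by
  obtain ⟨m, n, hm, hn⟩ := hx
  refine ⟨k + m, k + n, ?_, ?_⟩ <;> rw [zpow_add, mul_smul, zpow_natCast]
  · exact smul_mono_right _ hm
  · exact smul_mono_right _ hn

theorem exists_lt_pow_smul_of_mem_zpowersHull (hg : o < g • o) (hx : x ∈ zpowersHull g o)
    (hy : y ∈ zpowersHull g o) : ∃ n : ℕ, x < g ^ n • y := by
  obtain ⟨-, a, -, hxa⟩ := hx
  obtain ⟨b, -, hby, -⟩ := hy
  let n : ℕ := (a - b + 1).toNat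
  have hn : a < n + b := by lia
  refine ⟨n, ?_⟩
  calc
    x ≤ g ^ a • o := hxa
    _ < g ^ (n + b : ℤ) • o := strictMono_zpow_smul hg hn
    _ = g ^ n • g ^ b • o := by rw [zpow_add, mul_smul, zpow_natCast]
    _ ≤ g ^ n • y := smul_mono_right _ hby

theorem IsCrossingFree.exists_mem_zpowersHull_ge (hG : IsCrossingFree G Ω) (hg : o < g • o)
    (hu : u ∈ zpowersHull g o) (hfu : f • u ∈ zpowersHull g o) (hfv : f • v ∈ zpowersHull g o) :
    ∃ x ∈ zpowersHull g o, v ≤ x := by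
  by_contra! hv
  obtain ⟨k, hk⟩ := exists_lt_pow_smul_of_mem_zpowersHull hg hu hfu
  set F := g ^ k * f
  have hFu : u < F • u := by rwa [mul_smul]
  have hFv : F • v ∈ zpowersHull g o := by
    rw [mul_smul]
    exact pow_smul_mem_zpowersHull hfv k
  obtain ⟨M, hM⟩ := exists_lt_pow_smul_of_mem_zpowersHull hg hFv hu
  have hFuv (n : ℕ) : u < F ^ n • v :=
    (le_pow_smul hFu.le n).trans_lt ((smul_lt_smul_iff_of_covariant _).2 (hv u hu))
  have hw : g ^ M • u ∈ zpowersHull g o := pow_smul_mem_zpowersHull hu M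
  exact hG F g u v (g ^ M • u)
    { left_lt := (by simpa using hFuv 1 : u < F • v).trans hM
      lt_right := hv _ hw
      pow_smul_lt_right := fun n ↦ hv _ (pow_smul_mem_zpowersHull hu n)
      left_lt_pow_smul := hFuv
      exists_pow_smul_lt := ⟨1, by simpa using hM⟩
      exists_lt_pow_smul := exists_lt_pow_smul_of_mem_zpowersHull hg hw hu }

theorem IsCrossingFree.mem_zpowersHull_of_smul_mem (hG : IsCrossingFree G Ω) (hg : o < g • o)
    (hu : u ∈ zpowersHull g o) (hfu : f • u ∈ zpowersHull g o) (hfv : f • v ∈ zpowersHull g o) :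
    v ∈ zpowersHull g o := by
  obtain ⟨y, hy, hvy⟩ := hG.exists_mem_zpowersHull_ge hg hu hfu hfv
  obtain ⟨x, hx, hxv⟩ : ∃ x ∈ zpowersHull g o, x ≤ v := by
    have hg' : g⁻¹ • o < o := by
      rwa [← smul_lt_smul_iff_of_covariant g, smul_inv_smul]
    simp only [← zpowersHull_inv g] at hu hfu hfv ⊢
    obtain ⟨x, hx, hxv⟩ := hG.orderDual.exists_mem_zpowersHull_ge (OrderDual.toDual_lt_toDual.2 hg')
      (toDual_mem_zpowersHull.2 hu) (toDual_mem_zpowersHull.2 hfu) (toDual_mem_zpowersHull.2 hfv)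
    exact ⟨OrderDual.ofDual x, toDual_mem_zpowersHull.1 hx, hxv⟩
  exact (ordConnected_zpowersHull g o).out hx hy ⟨hxv, hvy⟩

theorem IsCrossingFree.isBlock_zpowersHull (hG : IsCrossingFree G Ω) (hg : o < g • o) :
    IsBlock G (zpowersHull g o) := by
  refine isBlock_iff_smul_eq_of_mem.2 fun f u hu hfu ↦ Set.Subset.antisymm ?_ fun v hv ↦ ?_
  · rintro _ ⟨v, hv, rfl⟩
    exact hG.mem_zpowersHull_of_smul_mem (f := f⁻¹) hg hfu (by simpa using hu) (by simpa using hv)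
  · rw [Set.mem_smul_set_iff_inv_smul_mem]
    exact hG.mem_zpowersHull_of_smul_mem (f := f) hg hu hfu (by simpa using hv)

theorem IsCrossingFree.zpowersHull_eq_univ (hG : IsCrossingFree G Ω) (hprim : IsOPrimitive G Ω)
    (hg : o < g • o) : zpowersHull g o = Set.univ := by
  refine (hprim _ (hG.isBlock_zpowersHull hg) (ordConnected_zpowersHull g o)).resolve_left ?_
  have hgo : g • o ∈ zpowersHull g o := by simpa using zpow_smul_self_mem_zpowersHull g o 1
  exact fun hsub ↦ hg.ne (hsub (self_mem_zpowersHull g o) hgo)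

theorem IsCrossingFree.exists_lt_pow_smul (hG : IsCrossingFree G Ω) (hprim : IsOPrimitive G Ω)
    (hg : o < g • o) (x y : Ω) : ∃ n : ℕ, x < g ^ n • y := by
  have huniv : zpowersHull g o = Set.univ := hG.zpowersHull_eq_univ hprim hg
  exact exists_lt_pow_smul_of_mem_zpowersHull hg (huniv ▸ Set.mem_univ x) (huniv ▸ Set.mem_univ y)

theorem IsCrossingFree.lt_smul_of_lt_smul (hG : IsCrossingFree G Ω) (hprim : IsOPrimitive G Ω)
    (hg : o < g • o) (x : Ω) : x < g • x := by
  obtain ⟨n, hn⟩ := hG.exists_lt_pow_smul hprim hg x x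
  exact not_le.1 fun hle ↦ hn.not_ge (pow_smul_le hle n)

theorem IsCrossingFree.smul_eq_self_of_smul_eq_self (hG : IsCrossingFree G Ω)
    (hprim : IsOPrimitive G Ω) (hx : g • x = x) (y : Ω) : g • y = y := by
  rcases lt_trichotomy (g • y) y with hlt | heq | hgt
  · rw [← smul_lt_smul_iff_of_covariant g⁻¹, inv_smul_smul] at hlt
    have hlt' : x < g⁻¹ • x := hG.lt_smul_of_lt_smul hprim hlt x
    exact absurd (inv_smul_eq_iff.2 hx.symm) hlt'.ne'
  · exact heq
  · exact absurd hx (hG.lt_smul_of_lt_smul hprim hgt x).ne'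

theorem IsCrossingFree.normal_stabilizer (hG : IsCrossingFree G Ω) (hprim : IsOPrimitive G Ω)
    (x : Ω) : (stabilizer G x).Normal where
  conj_mem n hn a := by
    have hfix : n • a⁻¹ • x = a⁻¹ • x := hG.smul_eq_self_of_smul_eq_self hprim hn _
    rw [mem_stabilizer_iff, mul_smul, mul_smul, hfix, smul_inv_smul]

end OrderedAction

section CosetOrder

variable {Γ : Type*} [Group Γ] [LinearOrder Γ]

theorem isConvexSubgroup_iff_ordConnected {C : Subgroup Γ} :
    IsConvexSubgroup C ↔ (C : Set Γ).OrdConnected := by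
  refine ⟨fun h ↦ ⟨fun c₁ hc₁ c₂ hc₂ f hf ↦ ?_⟩, fun h c₁ hc₁ c₂ hc₂ f h₁ h₂ ↦
    h.out hc₁ hc₂ ⟨h₁.le, h₂.le⟩⟩
  obtain ⟨h₁, h₂⟩ := hf
  rcases h₁.eq_or_lt with rfl | h₁
  · exact hc₁
  rcases h₂.eq_or_lt with rfl | h₂
  · exact hc₂
  exact h c₁ hc₁ c₂ hc₂ f h₁ h₂

/-- The order on the left cosets of a convex subgroup, obtained by comparing chosen
representatives; for convex subgroups `coset_mk_lt_mk` shows that the choice is immaterial. -/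
noncomputable instance cosetLinearOrder (H : Subgroup Γ) : LinearOrder (Γ ⧸ H) :=
  LinearOrder.lift' Quotient.out Quotient.out_injective

variable [MulLeftMono Γ] {H : Subgroup Γ}

theorem cosetLT_mul_left_iff (a : Γ) {x y : Γ} : CosetLT H (a * x) (a * y) ↔ CosetLT H x y := by
  simp [CosetLT, mul_assoc]

variable [hH : (H : Set Γ).OrdConnected]

theorem CosetLT.left_mul {x y h : Γ} (hxy : CosetLT H x y) (hh : h ∈ H) : CosetLT H (x * h) y := by
  refine ⟨fun hmem ↦ hxy.1 ?_, not_le.1 fun hle ↦ hxy.1 ?_⟩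
  · simpa [mul_assoc] using H.mul_mem hh hmem
  · exact hH.out H.one_mem hh ⟨by simpa using hxy.2.le, inv_mul_le_iff_le_mul.2 hle⟩

theorem CosetLT.right_mul {x y h : Γ} (hxy : CosetLT H x y) (hh : h ∈ H) :
    CosetLT H x (y * h) := by
  refine ⟨fun hmem ↦ hxy.1 ?_, not_le.1 fun hle ↦ hxy.1 ?_⟩
  · simpa [mul_assoc] using H.mul_mem hmem (H.inv_mem hh)
  · rw [← H.inv_mem_iff, mul_inv_rev, inv_inv]
    exact hH.out hh H.one_mem ⟨le_inv_mul_iff_mul_le.2 hle, by simpa using hxy.2.le⟩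

theorem coset_mk_lt_mk {x y : Γ} : (x : Γ ⧸ H) < y ↔ CosetLT H x y := by
  obtain ⟨h, hx⟩ := QuotientGroup.mk_out_eq_mul H x
  obtain ⟨k, hy⟩ := QuotientGroup.mk_out_eq_mul H y
  refine ⟨fun hlt ↦ ?_, fun hlt ↦ ?_⟩
  · have hne : (x : Γ ⧸ H) ≠ y := hlt.ne
    have hout : x * h < y * k := hx ▸ hy ▸ hlt
    have hcoset : CosetLT H (x * h) (y * k) := by
      refine ⟨fun hmem ↦ hne ?_, hout⟩
      simpa using QuotientGroup.eq.2 hmem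
    simpa using (hcoset.left_mul (H.inv_mem h.2)).right_mul (H.inv_mem k.2)
  · have hout : x * h < y * k := ((hlt.left_mul h.2).right_mul k.2).2
    exact (hx.trans_lt hout).trans_eq hy.symm

theorem monotone_coset_mk : Monotone ((↑) : Γ → Γ ⧸ H) := fun _ _ hxy ↦
  not_lt.1 fun hlt ↦ (coset_mk_lt_mk.1 hlt).2.not_ge hxy

instance covariantClass_smul_coset : CovariantClass Γ (Γ ⧸ H) HSMul.hSMul LE.le where
  elim := by
    rintro a ⟨x⟩ ⟨y⟩ hxy
    refine not_lt.1 fun hlt ↦ hxy.not_gt ?_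
    exact coset_mk_lt_mk.2 ((cosetLT_mul_left_iff a).1 (coset_mk_lt_mk.1 hlt))

theorem isTrivialBlock_of_mk_one_mem
    (hmax : ∀ K : Subgroup Γ, (K : Set Γ).OrdConnected → H ≤ K → K = H ∨ K = ⊤)
    {B : Set (Γ ⧸ H)} (hB : IsBlock Γ B) (hconv : B.OrdConnected) (h1 : ((1 : Γ) : Γ ⧸ H) ∈ B) :
    IsTrivialBlock B := by
  have hstab (a : Γ) : a ∈ stabilizer Γ B ↔ (a : Γ ⧸ H) ∈ B := by
    have hsmul : a • ((1 : Γ) : Γ ⧸ H) = a := by simp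
    rw [← hsmul, mem_stabilizer_iff]
    exact ⟨fun h ↦ h ▸ Set.smul_mem_smul_set h1, fun h ↦ isBlock_iff_smul_eq_of_mem.1 hB h1 h⟩
  have hH_le : H ≤ stabilizer Γ B := (stabilizer_quotient H).ge.trans (hB.stabilizer_le h1)
  have hstab_conv : (stabilizer Γ B : Set Γ).OrdConnected := by
    rw [show (stabilizer Γ B : Set Γ) = (↑) ⁻¹' B from Set.ext hstab]
    exact hconv.preimage_mono monotone_coset_mk
  rcases hmax _ hstab_conv hH_le with heq | heq
  · refine .inl (Set.subsingleton_of_subset_singleton (a := ((1 : Γ) : Γ ⧸ H)) ?_)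
    rintro ⟨a⟩ ha
    have haH : a ∈ H := heq ▸ (hstab a).2 ha
    exact QuotientGroup.eq.2 (by simpa using haH)
  · refine .inr (Set.eq_univ_of_forall ?_)
    rintro ⟨a⟩
    exact (hstab a).1 (heq ▸ Subgroup.mem_top a)

theorem isOPrimitive_coset
    (hmax : ∀ K : Subgroup Γ, (K : Set Γ).OrdConnected → H ≤ K → K = H ∨ K = ⊤) :
    IsOPrimitive Γ (Γ ⧸ H) := by
  intro B hB hconv
  rcases B.eq_empty_or_nonempty with rfl | ⟨x, hx⟩
  · exact .inl Set.subsingleton_empty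
  obtain ⟨a, rfl⟩ := QuotientGroup.mk_surjective x
  rw [← IsTrivialBlock.smul_iff a⁻¹]
  refine isTrivialBlock_of_mk_one_mem hmax (hB.translate a⁻¹) (ordConnected_smul_set hconv a⁻¹) ?_
  rw [Set.mem_smul_set_iff_inv_smul_mem]
  simpa using hx

end CosetOrder

section TranslationNumber

theorem smul_one_quotient {Γ : Type*} [Group Γ] {H : Subgroup Γ} [H.Normal] (g : Γ) :
    g • (1 : Γ ⧸ H) = g := by
  rw [← QuotientGroup.mk_one, Quotient.smul_coe, smul_eq_mul, mul_one]

variable {Γ : Type*} [Group Γ] [LinearOrder Γ]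

/-- A homomorphism to the reals that vanishes exactly on `H` and is positive on the positive
elements outside `H`. It is additive-valued, hence defined on `Additive Γ`. -/
structure IsTranslationNumber (H : Subgroup Γ) (τ : Additive Γ →+ ℝ) : Prop where
  eq_zero_iff : ∀ a : Γ, τ (.ofMul a) = 0 ↔ a ∈ H
  pos : ∀ a : Γ, a ∉ H → 1 < a → 0 < τ (.ofMul a)

variable [MulLeftMono Γ] {H : Subgroup Γ} {τ τ' : Additive Γ →+ ℝ}

theorem IsTranslationNumber.pos_iff (hτ : IsTranslationNumber H τ) {a : Γ} :
    0 < τ (.ofMul a) ↔ a ∉ H ∧ 1 < a := by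
  refine ⟨fun ha ↦ ?_, fun ⟨haH, ha⟩ ↦ hτ.pos a haH ha⟩
  have haH : a ∉ H := fun h ↦ ha.ne' ((hτ.eq_zero_iff a).2 h)
  refine ⟨haH, lt_of_not_ge fun hle ↦ ?_⟩
  have hlt : a < 1 := hle.lt_of_ne fun h ↦ haH (h ▸ H.one_mem)
  have hinv : 0 < τ (.ofMul a⁻¹) := hτ.pos a⁻¹ (by simpa using haH) (by simpa using hlt)
  rw [ofMul_inv, map_neg, neg_pos] at hinv
  exact hinv.asymm ha

theorem IsTranslationNumber.exists_pos_mul_eq (hτ : IsTranslationNumber H τ)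
    (hτ' : IsTranslationNumber H τ') (hne : τ ≠ 0) :
    ∃ c : ℝ, 0 < c ∧ ∀ a, τ' a = c * τ a :=
  exists_pos_mul_of_pos_imp_pos (fun _ ha ↦ hτ'.pos_iff.2 (hτ.pos_iff.1 ha)) hne

variable [(H : Set Γ).OrdConnected]

instance mulLeftMono_quotient [H.Normal] : MulLeftMono (Γ ⧸ H) where
  elim := by
    rintro ⟨a⟩ x y hxy
    exact smul_mono_right a hxy

theorem IsCrossingFree.mulRightMono_quotient [H.Normal] (hG : IsCrossingFree Γ (Γ ⧸ H))
    (hprim : IsOPrimitive Γ (Γ ⧸ H)) : MulRightMono (Γ ⧸ H) where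
  elim a x y hxy := by
    rcases hxy.eq_or_lt with rfl | hlt
    · exact le_rfl
    obtain ⟨g, hg⟩ := QuotientGroup.mk_surjective (x⁻¹ * y)
    have h1g : 1 < g • (1 : Γ ⧸ H) := by
      rw [smul_one_quotient, hg]
      simpa using hlt
    have hag : a < x⁻¹ * y * a := hg ▸ hG.lt_smul_of_lt_smul hprim h1g a
    change x * a ≤ y * a
    rw [mul_assoc, lt_inv_mul_iff_mul_lt] at hag
    exact hag.le

theorem IsCrossingFree.exists_isTranslationNumber (hG : IsCrossingFree Γ (Γ ⧸ H))
    (hprim : IsOPrimitive Γ (Γ ⧸ H)) : ∃ τ : Additive Γ →+ ℝ, IsTranslationNumber H τ := by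
  have : H.Normal := stabilizer_quotient H ▸ hG.normal_stabilizer hprim ((1 : Γ) : Γ ⧸ H)
  have : MulRightMono (Γ ⧸ H) := hG.mulRightMono_quotient hprim
  have harch (q : Γ ⧸ H) (hq : 1 < q) (x : Γ ⧸ H) : ∃ n : ℕ, x ≤ q ^ n := by
    obtain ⟨g, rfl⟩ := QuotientGroup.mk_surjective q
    rw [← smul_one_quotient g] at hq
    obtain ⟨n, hn⟩ := hG.exists_lt_pow_smul hprim hq x 1
    exact ⟨n, by simpa only [smul_one_quotient, QuotientGroup.mk_pow] using hn.le⟩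
  obtain ⟨σ, hσ⟩ := exists_strictMono_addMonoidHom_real harch
  refine ⟨σ.comp (QuotientGroup.mk' H).toAdditive, fun a ↦ ?_, fun a haH ha ↦ ?_⟩
  · exact (map_eq_zero_iff σ hσ.injective).trans (QuotientGroup.eq_one_iff a)
  · have hlt : ((1 : Γ) : Γ ⧸ H) < a := coset_mk_lt_mk.2 ⟨by simpa using haH, ha⟩
    exact (map_zero σ).symm.trans_lt (hσ hlt)

end TranslationNumber

section Subgroup

variable {Γ : Type*} [Group Γ] [LinearOrder Γ] {G H : Subgroup Γ}

instance mulLeftMono_subgroup [MulLeftMono Γ] : MulLeftMono G :=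
  ⟨fun a _ _ h ↦ mul_le_mul_right (α := Γ) h a⟩

instance ordConnected_subgroupOf [hH : (H : Set Γ).OrdConnected] :
    (H.subgroupOf G : Set G).OrdConnected :=
  hH.preimage_mono (Subtype.mono_coe _)

theorem ordConnected_map_subtype [hG : (G : Set Γ).OrdConnected] {K : Subgroup G}
    (hK : (K : Set G).OrdConnected) : (K.map G.subtype : Set Γ).OrdConnected := by
  refine ⟨?_⟩
  rintro _ ⟨a, ha, rfl⟩ _ ⟨b, hb, rfl⟩ x hx
  exact ⟨⟨x, hG.out a.2 b.2 hx⟩, hK.out ha hb hx, rfl⟩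

theorem eq_subgroupOf_or_eq_top_of_jump [(G : Set Γ).OrdConnected] (hHG : H ≤ G)
    (hjump : ∀ K : Subgroup Γ, IsConvexSubgroup K → H ≤ K → K ≤ G → K = H ∨ K = G)
    (K : Subgroup G) (hK : (K : Set G).OrdConnected) (hHK : H.subgroupOf G ≤ K) :
    K = H.subgroupOf G ∨ K = ⊤ := by
  have hmap : (K.map G.subtype).subgroupOf G = K :=
    Subgroup.comap_map_eq_self_of_injective G.subtype_injective K
  rcases hjump (K.map G.subtype) (isConvexSubgroup_iff_ordConnected.2 (ordConnected_map_subtype hK))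
    (fun x hx ↦ ⟨⟨x, hHG hx⟩, hHK hx, rfl⟩) (Subgroup.map_subtype_le K) with heq | heq
  · exact .inl (by rw [← heq, hmap])
  · exact .inr (by rw [← hmap, heq, Subgroup.subgroupOf_self])

theorem IsConradianExtension.isCrossingFree [MulLeftMono Γ] [(H : Set Γ).OrdConnected]
    (h : IsConradianExtension G H) : IsCrossingFree G (G ⧸ H.subgroupOf G) := by
  intro f g u v w hc
  obtain ⟨N, hN⟩ := hc.exists_pow_smul_lt
  obtain ⟨M, hM⟩ := hc.exists_lt_pow_smul
  have hM0 : M ≠ 0 := by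
    rintro rfl
    exact hM.not_gt (by simpa using hc.left_lt)
  have hN0 : N ≠ 0 := by
    rintro rfl
    exact hN.not_gt (by simpa using hc.lt_right)
  have coe_lt {x y : G} (hxy : (x : G ⧸ H.subgroupOf G) < y) : CosetLT H (x : Γ) y :=
    (coset_mk_lt_mk (H := H.subgroupOf G)).1 hxy
  obtain ⟨u, rfl⟩ := QuotientGroup.mk_surjective u
  obtain ⟨v, rfl⟩ := QuotientGroup.mk_surjective v
  obtain ⟨w, rfl⟩ := QuotientGroup.mk_surjective w
  exact h f g u v w f.2 g.2 u.2 v.2 w.2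
    ⟨coe_lt hc.left_lt, coe_lt hc.lt_right,
      fun n _ ↦ ⟨coe_lt (hc.pow_smul_lt_right n), coe_lt (hc.left_lt_pow_smul n)⟩,
      M, N, Nat.pos_of_ne_zero hM0, Nat.pos_of_ne_zero hN0, coe_lt hN, coe_lt hM⟩

end Subgroup

/-- Under the hypotheses of the convex-jump theorem, there exists a nontrivial
homomorphism `τ : G → ℝ` with kernel `H` which is positive on positive elements of
`G \ H`, unique up to multiplication by a positive real number. -/
theorem exists_unique_translation_number (Γ : Type*) [Group Γ] [LinearOrder Γ]
    [CovariantClass Γ Γ (· * ·) (· ≤ ·)] (G H : Subgroup Γ)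
    (hHG : H ≤ G) (hne : H ≠ G)
    (hHconv : IsConvexSubgroup H) (hGconv : IsConvexSubgroup G)
    (hjump : ∀ K : Subgroup Γ, IsConvexSubgroup K → H ≤ K → K ≤ G → K = H ∨ K = G)
    (hext : IsConradianExtension G H) :
    ∃ τ : G → ℝ,
      (∀ a b : G, τ (a * b) = τ a + τ b) ∧
      (∃ a : G, τ a ≠ 0) ∧
      (∀ a : G, τ a = 0 ↔ (a : Γ) ∈ H) ∧
      (∀ a : G, (a : Γ) ∉ H → 1 < (a : Γ) → 0 < τ a) ∧
      (∀ τ' : G → ℝ,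
        (∀ a b : G, τ' (a * b) = τ' a + τ' b) →
        (∃ a : G, τ' a ≠ 0) →
        (∀ a : G, τ' a = 0 ↔ (a : Γ) ∈ H) →
        (∀ a : G, (a : Γ) ∉ H → 1 < (a : Γ) → 0 < τ' a) →
        ∃ c : ℝ, 0 < c ∧ ∀ a : G, τ' a = c * τ a) := by
  rw [isConvexSubgroup_iff_ordConnected] at hHconv hGconv
  have hmax := eq_subgroupOf_or_eq_top_of_jump hHG hjump
  obtain ⟨τ, hτ⟩ := hext.isCrossingFree.exists_isTranslationNumber (isOPrimitive_coset hmax)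
  obtain ⟨a, haG, haH⟩ : ∃ a ∈ G, a ∉ H := SetLike.exists_of_lt (hHG.lt_of_ne hne)
  have hτa : τ (.ofMul ⟨a, haG⟩) ≠ 0 := fun h ↦ haH ((hτ.eq_zero_iff _).1 h)
  refine ⟨fun a ↦ τ (.ofMul a), fun a b ↦ map_add τ _ _, ⟨_, hτa⟩, hτ.eq_zero_iff, hτ.pos,
    fun τ' hadd _ hker hpos ↦ ?_⟩
  have hτ' : IsTranslationNumber (H.subgroupOf G)
      (AddMonoidHom.mk' (fun a ↦ τ' a.toMul) fun a b ↦ hadd a.toMul b.toMul) := ⟨hker, hpos⟩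
  exact hτ.exists_pos_mul_eq hτ' fun h ↦ hτa (DFunLike.congr_fun h _)
end

section
/- Let (Γ, ⪯) be a left-ordered group such that ⪯ is not Conradian, and let C be the Conradian soul of (Γ, ⪯); suppose C is nontrivial and the set of left-order positive cones on C is finite. Then there exists a left-invariant linear order ⪯* on Γ whose set of positive elements agrees with that of ⪯ outside C (i.e. for every g ∉ C, g ≻* 1 if and only if g ≻ 1) and which is approximated by its conjugates: for every finite set f₁, …, f_k of ⪯*-positive elements there exists h ∈ Γ such that the conjugate ordering (⪯*)_h is distinct from ⪯* and each f_i is (⪯*)_h-positive. -/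
/-- The ordering of a left-ordered group is Conradian. -/
def IsConradian (Γ : Type*) [Group Γ] [LinearOrder Γ] : Prop :=
  ∀ f g : Γ, 1 < f → 1 < g → ∃ n : ℕ, 0 < n ∧ g < f * g ^ n

/-- The restriction of the ordering to a subgroup `C` is Conradian. -/
def IsConradianOn {Γ : Type*} [Group Γ] [LinearOrder Γ] (C : Subgroup Γ) : Prop :=
  ∀ f ∈ C, ∀ g ∈ C, 1 < f → 1 < g → ∃ n : ℕ, 0 < n ∧ g < f * g ^ n

/-- `C` is the Conradian soul. -/
def IsConradianSoul {Γ : Type*} [Group Γ] [LinearOrder Γ] (C : Subgroup Γ) : Prop :=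
  IsConvexSubgroup C ∧ IsConradianOn C ∧
  ∀ K : Subgroup Γ, IsConvexSubgroup K → IsConradianOn K → K ≤ C

/-- `P` is the positive cone of a left-invariant linear order on the group `G`:
it is closed under multiplication and `G` is the disjoint union of `P`, `P⁻¹`
and `{1}`. -/
def IsPosCone {G : Type*} [Group G] (P : Set G) : Prop :=
  (∀ a ∈ P, ∀ b ∈ P, a * b ∈ P) ∧
  (∀ g : G, g ∈ P ∨ g⁻¹ ∈ P ∨ g = 1) ∧
  (1 : G) ∉ P ∧
  ∀ g ∈ P, g⁻¹ ∉ P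

/-!
For a positive cone `P` let `P_h = {g | h g h⁻¹ ∈ P}`, and write `P ⇝ Q` when `Q` is a limit of
such conjugates of `P`.

*Crossings.* If `f ≻ 1` lies outside the soul `C`, then some `x ∈ [1, f]` reverses the sign of an
element outside `C` by conjugation. Otherwise all of `[1, f]` normalizes the set of positive
elements outside `C`, and the largest convex subgroup inside this normalizer is Conradian, hence
contained in `C`, although it contains `f`. Taking `f` below finitely many given positive elements
outside `C`, conjugation by `x⁻¹` keeps all of them positive.

*Recurrence.* Hence every cone `P` agreeing with `⪯` outside `C` has a limit `Q` of conjugates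
`P_h ≠ Q` which again agrees with `⪯` outside `C`. Such cones form a compact space, so Zorn's lemma
gives `M` with `Q ⇝ M` whenever `M ⇝ Q`. Choosing `Q` as a limit of conjugates `M_h ≠ Q`, the
composite `Q ⇝ M ⇝ Q` exhibits `Q` as a limit of conjugates of itself that differ from it.
-/

open Filter Set
open scoped Pointwise

section Cones

variable {G : Type*} [Group G] {P Q R : Set G}

/-- The positive cone of the conjugate by `h` of the ordering with positive cone `P`. -/
def conjCone (h : G) (P : Set G) : Set G := {g | h * g * h⁻¹ ∈ P}

theorem mem_conjCone {h g : G} : g ∈ conjCone h P ↔ h * g * h⁻¹ ∈ P := Iff.rfl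

theorem conjCone_one (P : Set G) : conjCone 1 P = P := by
  ext g
  simp [mem_conjCone]

theorem conjCone_mul (a b : G) (P : Set G) : conjCone (a * b) P = conjCone b (conjCone a P) := by
  ext g
  simp [mem_conjCone, mul_assoc]

/-- The limit of an ultrafilter of subsets in the product topology on `α → {0, 1}`; such limits
replace compactness of the space of positive cones. -/
def ultralimit {α : Type*} (U : Ultrafilter (Set α)) : Set α := {a | ∀ᶠ P : Set α in U, a ∈ P}

theorem eventually_subset_of_subset_ultralimit {α : Type*} {U : Ultrafilter (Set α)}
    {F : Finset α} (hF : ↑F ⊆ ultralimit U) : ∀ᶠ P : Set α in U, ↑F ⊆ P :=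
  (eventually_all_finset F).2 fun _ hf => hF hf

namespace IsPosCone

theorem ne_iff_exists_inv_mem (hP : IsPosCone P) (hQ : IsPosCone Q) :
    P ≠ Q ↔ ∃ g ∈ Q, g⁻¹ ∈ P := by
  constructor
  · intro hne
    by_contra! hinv
    have hQP : Q ⊆ P := fun g hg => by
      rcases hP.2.1 g with h | h | rfl
      · exact h
      · exact absurd h (hinv g hg)
      · exact absurd hg hQ.2.2.1
    refine hne (hQP.antisymm' fun g hg => ?_)
    rcases hQ.2.1 g with h | h | rfl
    · exact h
    · exact absurd (hQP h) (hP.2.2.2 g hg)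
    · exact absurd hg hP.2.2.1
  · rintro ⟨g, hgQ, hgP⟩ rfl
    exact hP.2.2.2 g hgQ hgP

protected theorem conjCone (hP : IsPosCone P) (h : G) : IsPosCone (conjCone h P) := by
  obtain ⟨hmul, htri, hone, hinv⟩ := hP
  refine ⟨fun a ha b hb => ?_, fun g => ?_, ?_, fun g hg => ?_⟩
  · simpa only [mem_conjCone, conj_mul] using hmul _ ha _ hb
  · simpa only [mem_conjCone, conj_inv, conj_eq_one_iff] using htri (h * g * h⁻¹)
  · simpa [mem_conjCone] using hone
  · simpa only [mem_conjCone, conj_inv] using hinv _ hg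

protected theorem ultralimit {U : Ultrafilter (Set G)} (hU : ∀ᶠ P : Set G in U, IsPosCone P) :
    IsPosCone (ultralimit U) := by
  refine ⟨fun a ha b hb => ?_, fun g => ?_, fun h => ?_, fun g hg hg' => ?_⟩
  · filter_upwards [hU, ha, hb] with P hP haP hbP using hP.1 a haP b hbP
  · have htri : ∀ᶠ P : Set G in U, g ∈ P ∨ g⁻¹ ∈ P ∨ g = 1 := hU.mono fun P hP => hP.2.1 g
    rwa [Ultrafilter.eventually_or, Ultrafilter.eventually_or, eventually_const] at htri
  · obtain ⟨P, hP, h⟩ := (hU.and h).exists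
    exact hP.2.2.1 h
  · obtain ⟨P, hP, hg, hg'⟩ := (hU.and (hg.and hg')).exists
    exact hP.2.2.2 g hg hg'

end IsPosCone

/-- `Q` lies in the closure of the set of conjugates of `P`. For positive cones, containing a finite
subset of `Q` is a basic neighbourhood of `Q`. -/
def IsConjLimit (P Q : Set G) : Prop :=
  ∀ F : Finset G, ↑F ⊆ Q → ∃ h, ↑F ⊆ conjCone h P

/-- `Q` lies in the closure of the set of conjugates of `P` different from `Q`; for `Q = P`, the
ordering with positive cone `P` is approximated by its conjugates. -/
def IsConjAccPt (P Q : Set G) : Prop :=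
  ∀ F : Finset G, ↑F ⊆ Q → ∃ h, conjCone h P ≠ Q ∧ ↑F ⊆ conjCone h P

namespace IsConjLimit

theorem refl (P : Set G) : IsConjLimit P P := fun F hF => ⟨1, by rwa [conjCone_one]⟩

theorem exists_subset_conjCone_mul (hPQ : IsConjLimit P Q) {F : Finset G} {h : G}
    (hF : ↑F ⊆ conjCone h Q) : ∃ h', ↑F ⊆ conjCone (h' * h) P := by
  classical
  obtain ⟨h', hh'⟩ := hPQ (F.image fun f => h * f * h⁻¹) (by
    simpa [Set.subset_def, mem_conjCone] using hF)
  refine ⟨h', fun f hf => ?_⟩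
  rw [conjCone_mul]
  exact hh' (Finset.mem_coe.2 (Finset.mem_image_of_mem _ hf))

theorem trans (hPQ : IsConjLimit P Q) (hQR : IsConjLimit Q R) : IsConjLimit P R := fun F hF =>
  let ⟨_, hh⟩ := hQR F hF
  let ⟨h', hh'⟩ := hPQ.exists_subset_conjCone_mul hh
  ⟨h' * _, hh'⟩

theorem trans_isConjAccPt (hP : IsPosCone P) (hQ : IsPosCone Q) (hR : IsPosCone R)
    (hPQ : IsConjLimit P Q) (hQR : IsConjAccPt Q R) : IsConjAccPt P R := by
  classical
  intro F hF
  obtain ⟨h, hne, hFh⟩ := hQR F hF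
  obtain ⟨g, hgR, hgQ⟩ := ((hQ.conjCone h).ne_iff_exists_inv_mem hR).1 hne
  obtain ⟨h', hh'⟩ := hPQ.exists_subset_conjCone_mul (F := insert g⁻¹ F) (h := h) (by
    rw [Finset.coe_insert]
    exact insert_subset hgQ hFh)
  rw [Finset.coe_insert, insert_subset_iff] at hh'
  exact ⟨h' * h, ((hP.conjCone _).ne_iff_exists_inv_mem hR).2 ⟨g, hgR, hh'.1⟩, hh'.2⟩

theorem ultralimit {U : Ultrafilter (Set G)} (hU : ∀ᶠ Q : Set G in U, IsConjLimit P Q) :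
    IsConjLimit P (ultralimit U) := fun F hF =>
  let ⟨_, hQ, hFQ⟩ := (hU.and (eventually_subset_of_subset_ultralimit hF)).exists
  hQ F hFQ

end IsConjLimit

theorem IsConjAccPt.isConjLimit (h : IsConjAccPt P Q) : IsConjLimit P Q := fun F hF =>
  (h F hF).imp fun _ => And.right

theorem exists_ultrafilter_eventually_of_isChain {α : Type*} {r : α → α → Prop}
    (hrefl : ∀ a, r a a) (htrans : ∀ {a b c}, r a b → r b c → r a c)
    {c : Set α} (hc : IsChain r c) (hne : c.Nonempty) :
    ∃ U : Ultrafilter α, ∀ a ∈ c, ∀ᶠ b in U, b ∈ c ∧ r a b := by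
  let tail (a : c) : Set α := {b | b ∈ c ∧ r a b}
  have tail_subset {a b : c} (hab : r a b) : tail b ⊆ tail a :=
    fun _ hz => ⟨hz.1, htrans hab hz.2⟩
  have hdir : Directed (· ≥ ·) fun a => 𝓟 (tail a) := fun a b => by
    have : Std.Refl r := ⟨hrefl⟩
    rcases hc.total a.2 b.2 with hab | hba
    · exact ⟨b, principal_mono.2 (tail_subset hab), le_rfl⟩
    · exact ⟨a, le_rfl, principal_mono.2 (tail_subset hba)⟩
  have : Nonempty c := hne.to_subtype
  have : (⨅ a, 𝓟 (tail a)).NeBot :=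
    iInf_neBot_of_directed' hdir fun a => principal_neBot_iff.2 ⟨a, a.2, hrefl a⟩
  refine ⟨Ultrafilter.of (⨅ a, 𝓟 (tail a)), fun a ha => Ultrafilter.of_le _ ?_⟩
  exact mem_iInf_of_mem ⟨a, ha⟩ (mem_principal_self _)

theorem exists_isConjLimit_maximal {X : Set (Set G)} (hne : X.Nonempty)
    (hclosed : ∀ U : Ultrafilter (Set G), X ∈ U → ultralimit U ∈ X) :
    ∃ M ∈ X, ∀ P ∈ X, IsConjLimit M P → IsConjLimit P M := by
  let r (P Q : X) : Prop := IsConjLimit (P : Set G) Q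
  have bounded (c : Set X) (hc : IsChain r c) (hcne : c.Nonempty) : ∃ ub, ∀ P ∈ c, r P ub := by
    obtain ⟨U, hU⟩ := exists_ultrafilter_eventually_of_isChain (r := r)
      (fun P : X => IsConjLimit.refl P.1) IsConjLimit.trans hc hcne
    have hX : X ∈ U.map Subtype.val := Eventually.of_forall (f := (U : Filter X)) Subtype.prop
    exact ⟨⟨_, hclosed _ hX⟩, fun P hP =>
      IsConjLimit.ultralimit ((hU P hP).mono fun _ => And.right)⟩
  have : Nonempty X := hne.to_subtype
  obtain ⟨M, hM⟩ := exists_maximal_of_nonempty_chains_bounded bounded IsConjLimit.trans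
  exact ⟨M, M.2, fun P hP => hM ⟨P, hP⟩⟩

theorem exists_isConjAccPt_self {X : Set (Set G)} (hne : X.Nonempty)
    (hcone : ∀ P ∈ X, IsPosCone P)
    (hclosed : ∀ U : Ultrafilter (Set G), X ∈ U → ultralimit U ∈ X)
    (hacc : ∀ P ∈ X, ∃ Q ∈ X, IsConjAccPt P Q) : ∃ P ∈ X, IsConjAccPt P P := by
  obtain ⟨M, hMX, hM⟩ := exists_isConjLimit_maximal hne hclosed
  obtain ⟨Q, hQX, hMQ⟩ := hacc M hMX
  have hQM : IsConjLimit Q M := hM Q hQX hMQ.isConjLimit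
  exact ⟨Q, hQX, hQM.trans_isConjAccPt (hcone Q hQX) (hcone M hMX) (hcone Q hQX) hMQ⟩

end Cones

section ConvexSubgroups

theorem mem_conj_smul_iff {G : Type*} [Group G] {H : Subgroup G} {a g : G} :
    g ∈ MulAut.conj a • H ↔ a⁻¹ * g * a ∈ H := by
  rw [Subgroup.mem_pointwise_smul_iff_inv_smul_mem, MulAut.smul_def, MulAut.conj_inv_apply]

variable {Γ : Type*} [Group Γ] [LinearOrder Γ] {C : Subgroup Γ} {x y : Γ}

/-- The positive elements outside the subgroup `C`. For convex `C` these are the elements `g` with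
`C ≺ gC` in the induced order on `Γ ⧸ C`; accordingly `g⁻¹ ∉ posOutside C` means `C ⪯ gC`. -/
def posOutside (C : Subgroup Γ) : Set Γ := {g | 1 < g ∧ g ∉ C}

/-- Conjugation by `x⁻¹` makes some positive element outside `C` negative, and keeps it outside
`C`. -/
def IsReversing (C : Subgroup Γ) (x : Γ) : Prop :=
  ∃ k ∈ posOutside C, (x⁻¹ * k * x)⁻¹ ∈ posOutside C

theorem mem_posOutside_of_one_le (hx : 1 ≤ x) (hxC : x ∉ C) : x ∈ posOutside C :=
  ⟨lt_of_le_of_ne hx fun h => hxC (h ▸ C.one_mem), hxC⟩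

theorem inv_notMem_posOutside_of_mem (hx : x ∈ C) : x⁻¹ ∉ posOutside C :=
  fun h => h.2 (C.inv_mem hx)

theorem IsConradianSoul.posOutside_nonempty (hC : IsConradianSoul C) (hnc : ¬ IsConradian Γ) :
    (posOutside C).Nonempty := by
  by_contra! hempty
  have hmem (x : Γ) (hx : 1 < x) : x ∈ C :=
    by_contra fun hxC => (hempty ▸ (⟨hx, hxC⟩ : x ∈ posOutside C) : x ∈ (∅ : Set Γ))
  exact hnc fun a b ha hb => hC.2.1 a (hmem a ha) b (hmem b hb) ha hb

/-- The positive cones on `Γ` whose ordering agrees with the given one outside `C`. -/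
def conesAgreeingOutside (C : Subgroup Γ) : Set (Set Γ) :=
  {P | IsPosCone P ∧ ∀ g ∉ C, (g ∈ P ↔ 1 < g)}

theorem posOutside_subset_of_mem_conesAgreeingOutside {P : Set Γ}
    (hP : P ∈ conesAgreeingOutside C) : posOutside C ⊆ P :=
  fun g hg => (hP.2 g hg.2).2 hg.1

variable [MulLeftMono Γ]

theorem mem_or_mem_posOutside_or_inv_mem_posOutside (C : Subgroup Γ) (x : Γ) :
    x ∈ C ∨ x ∈ posOutside C ∨ x⁻¹ ∈ posOutside C := by
  by_cases hxC : x ∈ C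
  · exact Or.inl hxC
  rcases lt_trichotomy 1 x with hx | rfl | hx
  · exact Or.inr (Or.inl ⟨hx, hxC⟩)
  · exact absurd C.one_mem hxC
  · exact Or.inr (Or.inr ⟨Left.one_lt_inv_iff.2 hx, mt C.inv_mem_iff.1 hxC⟩)

theorem inv_notMem_posOutside_of_one_le (hx : 1 ≤ x) : x⁻¹ ∉ posOutside C :=
  fun h => hx.not_gt (Left.one_lt_inv_iff.1 h.1)

theorem inv_notMem_posOutside (hx : x ∈ posOutside C) : x⁻¹ ∉ posOutside C :=
  inv_notMem_posOutside_of_one_le hx.1.le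

theorem isPosCone_setOf_one_lt : IsPosCone {g : Γ | 1 < g} := by
  refine ⟨fun a ha b hb => Left.one_lt_mul ha hb, fun g => ?_, lt_irrefl 1, fun g hg hg' => ?_⟩
  · rcases lt_trichotomy 1 g with h | h | h
    · exact Or.inl h
    · exact Or.inr (Or.inr h.symm)
    · exact Or.inr (Or.inl (Left.one_lt_inv_iff.2 h))
  · exact lt_asymm hg (Left.one_lt_inv_iff.1 hg')

namespace IsConvexSubgroup

theorem mul_mem_posOutside_of_inv_notMem_left (hC : IsConvexSubgroup C) (hx : x⁻¹ ∉ posOutside C)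
    (hy : y ∈ posOutside C) : x * y ∈ posOutside C := by
  rcases mem_or_mem_posOutside_or_inv_mem_posOutside C x with hxC | hx' | hx'
  · have hxy : x * y ∉ C := mt (C.mul_mem_cancel_left hxC).1 hy.2
    refine ⟨lt_of_not_ge fun hle => hy.2 ?_, hxy⟩
    have hyx : y < x⁻¹ := by
      refine lt_of_le_of_ne (by simpa using le_inv_mul_iff_mul_le.2 hle) ?_
      rintro rfl
      exact hy.2 (C.inv_mem hxC)
    exact hC 1 C.one_mem x⁻¹ (C.inv_mem hxC) y hy.1 hyx
  · have hlt : x < x * y := lt_mul_of_one_lt_right' x hy.1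
    exact ⟨hx'.1.trans hlt, fun hxy => hx'.2 (hC 1 C.one_mem _ hxy x hx'.1 hlt)⟩
  · exact absurd hx' hx

theorem mul_mem_posOutside_of_inv_notMem_right (hC : IsConvexSubgroup C) (hx : x ∈ posOutside C)
    (hy : y⁻¹ ∉ posOutside C) : x * y ∈ posOutside C := by
  by_contra hxy
  refine hy ?_
  simpa using hC.mul_mem_posOutside_of_inv_notMem_left (x := (x * y)⁻¹) (by rwa [inv_inv]) hx

theorem conj_mem_posOutside (hC : IsConvexSubgroup C) (hx : x ∈ C) (hy : y ∈ posOutside C) :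
    x * y * x⁻¹ ∈ posOutside C :=
  hC.mul_mem_posOutside_of_inv_notMem_right
    (hC.mul_mem_posOutside_of_inv_notMem_left (inv_notMem_posOutside_of_mem hx) hy)
    (inv_notMem_posOutside_of_mem (C.inv_mem hx))

theorem le_normalizer_posOutside (hC : IsConvexSubgroup C) :
    C ≤ Subgroup.normalizer (posOutside C) := fun x hx k => by
  refine ⟨hC.conj_mem_posOutside hx, fun hk => ?_⟩
  simpa [mul_assoc] using hC.conj_mem_posOutside (C.inv_mem hx) hk

theorem conj_smul (hC : IsConvexSubgroup C) (hy : ∀ k ∈ posOutside C, 1 < y * k * y⁻¹) :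
    IsConvexSubgroup (MulAut.conj y • C) := by
  intro a ha b hb z haz hzb
  rw [mem_conj_smul_iff] at ha hb ⊢
  rcases mem_or_mem_posOutside_or_inv_mem_posOutside C (y⁻¹ * z * y) with hz | hz | hz
  · exact hz
  · have hpos := hy _ (hC.mul_mem_posOutside_of_inv_notMem_left
      (inv_notMem_posOutside_of_mem (C.inv_mem hb)) hz)
    have hbz : 1 < b⁻¹ * z := by simpa [mul_assoc] using hpos
    exact absurd hzb (by simpa using (lt_inv_mul_iff_mul_lt.1 hbz).le)
  · have hpos := hy _ (hC.mul_mem_posOutside_of_inv_notMem_right hz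
      (inv_notMem_posOutside_of_mem ha))
    have hza : 1 < z⁻¹ * a := by simpa [mul_assoc] using hpos
    exact absurd haz (by simpa using (lt_inv_mul_iff_mul_lt.1 hza).le)

end IsConvexSubgroup

theorem IsReversing.notMem_normalizer (hx : IsReversing C x) :
    x ∉ Subgroup.normalizer (posOutside C) := by
  obtain ⟨k, hk, hk'⟩ := hx
  exact fun hmem =>
    inv_notMem_posOutside ((Subgroup.mem_set_normalizer_iff''.1 hmem k).1 hk) hk'

/-- The largest convex subgroup contained in the subgroup `N`. -/
def convexCore (N : Subgroup Γ) : Subgroup Γ where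
  carrier := {x | uIcc 1 x ⊆ N}
  one_mem' := by simp
  mul_mem' {a b} ha hb z hz := by
    rcases uIcc_subset_uIcc_union_uIcc (b := a) hz with hz | hz
    · exact ha hz
    · have : a⁻¹ * z ∈ uIcc 1 b := by
        simpa [mem_uIcc, inv_mul_le_iff_le_mul, le_inv_mul_iff_mul_le] using hz
      exact (N.mul_mem_cancel_left (N.inv_mem (ha right_mem_uIcc))).1 (hb this)
  inv_mem' {a} ha z hz := by
    have : a * z ∈ uIcc 1 a := by
      rw [uIcc_comm, mem_uIcc] at hz
      rw [mem_uIcc]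
      simpa [← inv_mul_le_iff_le_mul, ← le_inv_mul_iff_mul_le] using hz
    exact (N.mul_mem_cancel_left (ha right_mem_uIcc)).1 (ha this)

theorem convexCore_le (N : Subgroup Γ) : convexCore N ≤ N := fun _ hx => hx right_mem_uIcc

theorem isConvexSubgroup_convexCore (N : Subgroup Γ) : IsConvexSubgroup (convexCore N) := by
  intro a ha b hb z haz hzb w hw
  rcases mem_uIcc.1 hw with ⟨h1w, hwz⟩ | ⟨hzw, hw1⟩
  · exact hb (mem_uIcc.2 (Or.inl ⟨h1w, hwz.trans hzb.le⟩))
  · exact ha (mem_uIcc.2 (Or.inr ⟨haz.le.trans hzw, hw1⟩))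

end ConvexSubgroups

section Soul

variable {Γ : Type*} [Group Γ] [LinearOrder Γ] [MulLeftMono Γ] {C : Subgroup Γ} {f x : Γ}

namespace IsConradianSoul

theorem le_of_forall_not_isReversing (hC : IsConradianSoul C) {K : Subgroup Γ}
    (hK : IsConvexSubgroup K) (hrev : ∀ b ∈ K, 1 < b → ¬ IsReversing C b) : K ≤ C := by
  obtain ⟨hconv, hConrad, hmax⟩ := hC
  refine hmax K hK fun a _ b hb ha1 hb1 => ?_
  have hb_or : b ∈ C ∨ b ∈ posOutside C := or_iff_not_imp_left.2 fun h => ⟨hb1, h⟩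
  by_cases hab : a ∈ C ∧ b ∈ C
  · exact hConrad a hab.1 b hab.2 ha1 hb1
  rcases hb_or with hbC | hbP
  · have haP : a ∈ posOutside C := ⟨ha1, fun haC => hab ⟨haC, hbC⟩⟩
    have hpos : b⁻¹ * a * b ∈ posOutside C := by
      simpa using hconv.conj_mem_posOutside (C.inv_mem hbC) haP
    exact ⟨1, one_pos, by simpa [mul_assoc, lt_inv_mul_iff_mul_lt] using hpos.1⟩
  · -- `a` may lie in `C`, where conjugation by `b` is not controlled, but `a * b` does not.
    have habP : a * b ∈ posOutside C :=
      hconv.mul_mem_posOutside_of_inv_notMem_left (inv_notMem_posOutside_of_one_le ha1.le) hbP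
    have hnonneg : (b⁻¹ * (a * b) * b)⁻¹ ∉ posOutside C := fun h => hrev b hb hb1 ⟨_, habP, h⟩
    have hpos := hconv.mul_mem_posOutside_of_inv_notMem_left hnonneg hbP
    exact ⟨3, by norm_num, by simpa [mul_assoc, lt_inv_mul_iff_mul_lt, pow_succ] using hpos.1⟩

theorem le_of_notMem (hC : IsConradianSoul C) {K : Subgroup Γ} (hK : IsConvexSubgroup K)
    (hx1 : 1 < x) (hxK : x ∉ K) (hrev : ∀ z ∈ Icc 1 x, ¬ IsReversing C z) : K ≤ C :=
  hC.le_of_forall_not_isReversing hK fun b hb hb1 =>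
    hrev b ⟨hb1.le, le_of_not_gt fun hxb => hxK (hK 1 K.one_mem b hb x hx1 hxb)⟩

theorem inv_conj_smul_le (hC : IsConradianSoul C) (hx : x ∈ posOutside C)
    (hrev : ∀ z ∈ Icc 1 x, ¬ IsReversing C z) : MulAut.conj x⁻¹ • C ≤ C := by
  by_contra hle
  obtain ⟨c, hc, hcneg⟩ : ∃ c ∈ C, (x⁻¹ * c * x)⁻¹ ∈ posOutside C := by
    obtain ⟨z, hz, hzC⟩ := SetLike.not_le_iff_exists.1 hle
    rw [mem_conj_smul_iff, inv_inv] at hz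
    rcases mem_or_mem_posOutside_or_inv_mem_posOutside C z with h | h | h
    · exact absurd h hzC
    · exact ⟨_, C.inv_mem hz, by simpa [mul_assoc] using h⟩
    · exact ⟨_, hz, by simpa [mul_assoc] using h⟩
  have hpos (k : Γ) (hk : k ∈ posOutside C) : x⁻¹ * k * x ∈ posOutside C := by
    have hck : c * k ∈ posOutside C :=
      hC.1.mul_mem_posOutside_of_inv_notMem_left (inv_notMem_posOutside_of_mem hc) hk
    have hnonneg : (x⁻¹ * (c * k) * x)⁻¹ ∉ posOutside C :=
      fun h => hrev x ⟨hx.1.le, le_rfl⟩ ⟨_, hck, h⟩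
    simpa [mul_assoc] using hC.1.mul_mem_posOutside_of_inv_notMem_right hcneg hnonneg
  refine hle (hC.le_of_notMem (hC.1.conj_smul fun k hk => ?_) hx.1 ?_ hrev)
  · simpa using (hpos k hk).1
  · rw [mem_conj_smul_iff]
    simpa using hx.2

theorem mem_posOutside_of_inv_conj_mem (hC : IsConradianSoul C) (hx : x ∈ posOutside C)
    (hrev : ∀ z ∈ Icc 1 x, ¬ IsReversing C z) {k : Γ} (hk : x⁻¹ * k * x ∈ posOutside C) :
    k ∈ posOutside C := by
  rcases mem_or_mem_posOutside_or_inv_mem_posOutside C k with hkC | hkP | hkN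
  · refine absurd (hC.inv_conj_smul_le hx hrev ?_) hk.2
    rw [mem_conj_smul_iff]
    simpa [mul_assoc] using hkC
  · exact hkP
  · refine absurd ⟨k⁻¹, hkN, ?_⟩ (hrev x ⟨hx.1.le, le_rfl⟩)
    simpa [mul_assoc] using hk

theorem conj_smul_le (hC : IsConradianSoul C) (hx : x ∈ posOutside C)
    (hrev : ∀ z ∈ Icc 1 x, ¬ IsReversing C z) : MulAut.conj x • C ≤ C := by
  refine hC.le_of_notMem (hC.1.conj_smul fun k hk => ?_) hx.1 ?_ hrev
  · refine (hC.mem_posOutside_of_inv_conj_mem hx hrev (k := x * k * x⁻¹) ?_).1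
    simpa [mul_assoc] using hk
  · simpa [mem_conj_smul_iff] using hx.2

theorem mem_normalizer_posOutside (hC : IsConradianSoul C) (hx : 1 ≤ x)
    (hrev : ∀ z ∈ Icc 1 x, ¬ IsReversing C z) : x ∈ Subgroup.normalizer (posOutside C) := by
  by_cases hxC : x ∈ C
  · exact hC.1.le_normalizer_posOutside hxC
  have hxP : x ∈ posOutside C := mem_posOutside_of_one_le hx hxC
  refine Subgroup.mem_set_normalizer_iff''.2 fun k =>
    ⟨fun hk => ?_, hC.mem_posOutside_of_inv_conj_mem hxP hrev⟩
  rcases mem_or_mem_posOutside_or_inv_mem_posOutside C (x⁻¹ * k * x) with h | h | h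
  · refine absurd (hC.conj_smul_le hxP hrev ?_) hk.2
    rwa [mem_conj_smul_iff]
  · exact h
  · exact absurd ⟨k, hk, h⟩ (hrev x ⟨hx, le_rfl⟩)

theorem exists_isReversing_mem_Icc (hC : IsConradianSoul C) (hf : f ∈ posOutside C) :
    ∃ x ∈ Icc 1 f, IsReversing C x := by
  by_contra! hrev
  have hcore : convexCore (Subgroup.normalizer (posOutside C)) ≤ C :=
    hC.le_of_forall_not_isReversing (isConvexSubgroup_convexCore _) fun b hb _ hb' =>
      hb'.notMem_normalizer (convexCore_le _ hb)
  have hIcc : uIcc 1 f ⊆ Subgroup.normalizer (posOutside C) := by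
    rw [uIcc_of_le hf.1.le]
    exact fun x hx => hC.mem_normalizer_posOutside hx.1 fun z hz => hrev z ⟨hz.1, hz.2.trans hx.2⟩
  exact hf.2 (hcore hIcc)

theorem exists_isReversing_inv_conj_mem_posOutside (hC : IsConradianSoul C)
    (hnc : ¬ IsConradian Γ) (F : Finset Γ) :
    ∃ x, IsReversing C x ∧ ∀ f ∈ F, f ∈ posOutside C → x⁻¹ * f * x ∈ posOutside C := by
  classical
  obtain ⟨f₀, hf₀⟩ := hC.posOutside_nonempty hnc
  obtain ⟨m, hm, hmin⟩ := (insert f₀ (F.filter (· ∈ posOutside C))).exists_min_image id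
    (Finset.insert_nonempty _ _)
  have hmP : m ∈ posOutside C := by
    rcases Finset.mem_insert.1 hm with rfl | hm
    · exact hf₀
    · exact (Finset.mem_filter.1 hm).2
  obtain ⟨x, ⟨h1x, hxm⟩, hx⟩ := hC.exists_isReversing_mem_Icc hmP
  have hxC : x ∉ C := fun h => hx.notMem_normalizer (hC.1.le_normalizer_posOutside h)
  have hxP : x ∈ posOutside C := mem_posOutside_of_one_le h1x hxC
  refine ⟨x, hx, fun f hf hfP => ?_⟩
  have hxf : x ≤ f :=
    hxm.trans (hmin f (Finset.mem_insert_of_mem (Finset.mem_filter.2 ⟨hf, hfP⟩)))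
  refine hC.1.mul_mem_posOutside_of_inv_notMem_left (inv_notMem_posOutside_of_one_le ?_) hxP
  exact le_inv_mul_iff_mul_le.2 (by rwa [mul_one])

theorem exists_ultrafilter_isReversing_inv (hC : IsConradianSoul C) (hnc : ¬ IsConradian Γ) :
    ∃ U : Ultrafilter Γ, (∀ᶠ h in U, IsReversing C h⁻¹) ∧
      ∀ f ∈ posOutside C, ∀ᶠ h in U, h * f * h⁻¹ ∈ posOutside C := by
  choose x hrev hpos using hC.exists_isReversing_inv_conj_mem_posOutside hnc
  let U : Ultrafilter (Finset Γ) := Ultrafilter.of atTop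
  refine ⟨U.map fun F => (x F)⁻¹, ?_, fun f hf => ?_⟩
  · exact Eventually.of_forall (f := (U : Filter (Finset Γ))) fun F => by simpa using hrev F
  · have hmem : ∀ᶠ F : Finset Γ in atTop, f ∈ F :=
      (eventually_ge_atTop {f}).mono fun _ => Finset.singleton_subset_iff.1
    exact (hmem.filter_mono (Ultrafilter.of_le atTop)).mono fun F hF => by
      simpa using hpos F f hF hf

end IsConradianSoul

theorem mem_conesAgreeingOutside_of_posOutside_subset {P : Set Γ} (hP : IsPosCone P)
    (hsub : posOutside C ⊆ P) : P ∈ conesAgreeingOutside C := by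
  refine ⟨hP, fun g hgC => ⟨fun hgP => ?_, fun hg => hsub ⟨hg, hgC⟩⟩⟩
  rcases mem_or_mem_posOutside_or_inv_mem_posOutside C g with h | h | h
  · exact absurd h hgC
  · exact h.1
  · exact absurd (hsub h) (hP.2.2.2 g hgP)

theorem ultralimit_mem_conesAgreeingOutside {U : Ultrafilter (Set Γ)}
    (hU : conesAgreeingOutside C ∈ U) : ultralimit U ∈ conesAgreeingOutside C := by
  have hU : ∀ᶠ P : Set Γ in U, P ∈ conesAgreeingOutside C := hU
  refine mem_conesAgreeingOutside_of_posOutside_subset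
    (IsPosCone.ultralimit (hU.mono fun _ hP => hP.1)) fun g hg => ?_
  exact hU.mono fun P hP => posOutside_subset_of_mem_conesAgreeingOutside hP hg

theorem IsConradianSoul.exists_isConjAccPt (hC : IsConradianSoul C) (hnc : ¬ IsConradian Γ)
    {P : Set Γ} (hP : P ∈ conesAgreeingOutside C) :
    ∃ Q ∈ conesAgreeingOutside C, IsConjAccPt P Q := by
  obtain ⟨U, hrev, hpos⟩ := hC.exists_ultrafilter_isReversing_inv hnc
  have hPsub : posOutside C ⊆ P := posOutside_subset_of_mem_conesAgreeingOutside hP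
  let V : Ultrafilter (Set Γ) := U.map fun h => conjCone h P
  have hVcone : IsPosCone (ultralimit V) :=
    IsPosCone.ultralimit (Eventually.of_forall (f := (U : Filter Γ)) hP.1.conjCone)
  have hVsub : posOutside C ⊆ ultralimit V := fun f hf => (hpos f hf).mono fun h hh => hPsub hh
  refine ⟨_, mem_conesAgreeingOutside_of_posOutside_subset hVcone hVsub, fun F hF => ?_⟩
  have hFV : ∀ᶠ h in U, ↑F ⊆ conjCone h P := eventually_subset_of_subset_ultralimit hF
  obtain ⟨h, ⟨k, hk, hk'⟩, hFh⟩ := (hrev.and hFV).exists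
  refine ⟨h, ((hP.1.conjCone h).ne_iff_exists_inv_mem hVcone).2 ⟨k, hVsub hk, hPsub ?_⟩, hFh⟩
  simpa [mul_assoc] using hk'

end Soul

theorem exists_ordering_approximated_by_conjugates_general (Γ : Type*) [Group Γ]
    [LinearOrder Γ] [MulLeftMono Γ] (hnc : ¬ IsConradian Γ)
    (C : Subgroup Γ) (hC : IsConradianSoul C) :
    ∃ P : Set Γ, IsPosCone P ∧
      (∀ g : Γ, g ∉ C → (g ∈ P ↔ 1 < g)) ∧
      ∀ F : Finset Γ, (∀ f ∈ F, f ∈ P) →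
        ∃ h : Γ, (∃ g : Γ, ¬ ((h * g * h⁻¹ ∈ P) ↔ g ∈ P)) ∧
          ∀ f ∈ F, h * f * h⁻¹ ∈ P := by
  have hne : (conesAgreeingOutside C).Nonempty :=
    ⟨_, isPosCone_setOf_one_lt, fun _ _ => Iff.rfl⟩
  obtain ⟨P, ⟨hcone, hagree⟩, hacc⟩ := exists_isConjAccPt_self hne (fun _ hP => hP.1)
    (fun _ => ultralimit_mem_conesAgreeingOutside) (fun _ => hC.exists_isConjAccPt hnc)
  refine ⟨P, hcone, hagree, fun F hF => ?_⟩
  obtain ⟨h, hne, hFh⟩ := hacc F hF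
  exact ⟨h, by simpa [Set.ext_iff, mem_conjCone] using hne, hFh⟩

/-- If the ordering of a left-ordered group is not Conradian and its Conradian soul
`C` is nontrivial with only finitely many orderings, then there is a left-invariant
linear order on `Γ` (given by its positive cone `P`) agreeing with the original one
outside `C` which is approximated by its conjugates. -/
theorem exists_ordering_approximated_by_conjugates (Γ : Type*) [Group Γ]
    [LinearOrder Γ] [CovariantClass Γ Γ (· * ·) (· ≤ ·)]
    (hnc : ¬ IsConradian Γ)
    (C : Subgroup Γ) (hC : IsConradianSoul C) (hCnt : C ≠ ⊥)
    (hfin : {P : Set C | IsPosCone P}.Finite) :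
    ∃ P : Set Γ, IsPosCone P ∧
      (∀ g : Γ, g ∉ C → (g ∈ P ↔ 1 < g)) ∧
      ∀ F : Finset Γ, (∀ f ∈ F, f ∈ P) →
        ∃ h : Γ, (∃ g : Γ, ¬ ((h * g * h⁻¹ ∈ P) ↔ g ∈ P)) ∧
          ∀ f ∈ F, h * f * h⁻¹ ∈ P :=
  exists_ordering_approximated_by_conjugates_general Γ hnc C hC
end
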